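/- Assume the multiplicity parameters are real with 0 < τ_a² < 1 for all a ∈ R. Define the weight δ_λ := τ_{w_λ}² for λ ∈ P, the Hilbert space ℓ²(P,δ) := {f : P → ℂ : ∑_{λ∈P} |f(λ)|² δ_λ < ∞} with inner product ⟨f,g⟩_δ := ∑_{λ∈P} f(λ) \overline{g(λ)} δ_λ. Then for every j ∈ {0,…,n} and every u ∈ Ω the operators T̂_j and u (acting by (uf)(λ) := f(u⁻¹λ)) map ℓ²(P,δ) boundedly into itself, and ⟨T̂_j f, g⟩_δ = ⟨f, T̂_j g⟩_δ and ⟨u f, g⟩_δ = ⟨f, u⁻¹ g⟩_δ for all f, g ∈ ℓ²(P,δ); i.e. the difference-reflection representation of the extended affine Hecke algebra is unitary on ℓ²(P,δ) with respect to the ∗-structure T_w∗ = T_{w⁻¹}. -/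

import Mathlib

open scoped RealInnerProductSpace BigOperators Classical

noncomputable section

/-- Alternating composition `A ∘ B ∘ A ∘ ⋯` with `m` factors (starting with `A`). -/
def altComp {α : Type*} (A B : α → α) : ℕ → (α → α)
  | 0 => id
  | m + 1 => A ∘ altComp B A m

/-- The sign of a real number, as an integer (with `sgnZ 0 = 0`). -/
def sgnZ (x : ℝ) : ℤ := if 0 < x then 1 else if x < 0 then -1 else 0

/-- The function `v(x) = (1-t²)∫₀ˣ dy/(1-2t cos y+t²)`. -/
def mvfun (t x : ℝ) : ℝ :=
  (1 - t ^ 2) * ∫ y in (0:ℝ)..x, 1 / (1 - 2 * t * Real.cos y + t ^ 2)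

section AffineOps

variable {V : Type*} [NormedAddCommGroup V] [InnerProductSpace ℝ V]

/-- The coroot `α∨ = 2α/⟨α,α⟩`. -/
def coroot (α : V) : V := (2 / ⟪α, α⟫) • α

/-- The affine root `a = α∨ + r c` (encoded as the pair `(α, r)`), as an affine
function on `V`. -/
def aval (c : ℝ) (a : V × ℤ) (x : V) : ℝ := ⟪x, coroot a.1⟫ + a.2 * c

/-- The affine reflection `s_a(x) = x - a(x) α` attached to `a = α∨ + r c`. -/
def sAff (c : ℝ) (a : V × ℤ) (x : V) : V := x - aval c a x • a.1

/-- `w` maps the affine root `a` to the affine root `b`, i.e. `(wa)(x) = a(w⁻¹x) = b(x)`. -/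
def mapsRoot (c : ℝ) (w : Equiv.Perm V) (a b : V × ℤ) : Prop :=
  ∀ x : V, aval c a (w⁻¹ x) = aval c b x

/-- The linear part `w′` of an affine transformation `w`. -/
def linPart (w : Equiv.Perm V) (x : V) : V := w x - w 0

variable {R : Type*} [Field R]

/-- The difference-reflection operator `T̂_a`. -/
def hatT (c : ℝ) (τ : V × ℤ → R) (a : V × ℤ) (f : V → R) (x : V) : R :=
  if 0 < aval c a x then τ a * f (sAff c a x)
  else if aval c a x = 0 then τ a * f x
  else (τ a)⁻¹ * f (sAff c a x) + (τ a - (τ a)⁻¹) * f x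

/-- The discrete integral operator `J_a`. -/
def Jop (c : ℝ) (a : V × ℤ) (f : V → R) (x : V) : R :=
  if 0 < aval c a x then
    - ∑ k ∈ Finset.Icc (1 : ℤ) ⌊aval c a x⌋, f (x - k • a.1)
  else if aval c a x = 0 then 0
  else ∑ k ∈ Finset.Ico (0 : ℤ) (-⌊aval c a x⌋), f (x + k • a.1)

/-- The integral-reflection operator `I_a = τ_a s_a + (τ_a - τ_a⁻¹) J_a`. -/
def Iop (c : ℝ) (τ : V × ℤ → R) (a : V × ℤ) (f : V → R) (x : V) : R :=
  τ a * f (sAff c a x) + (τ a - (τ a)⁻¹) * Jop c a f x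

end AffineOps

/-- An irreducible reduced crystallographic root system spanning `V`, together with a
choice of positive roots, simple roots, and the highest short root. -/
structure RootSystemData (V : Type*) [NormedAddCommGroup V] [InnerProductSpace ℝ V] :
    Type _ where
  n : ℕ
  n_pos : 1 ≤ n
  rank_eq : Module.finrank ℝ V = n
  R0 : Finset V
  ne_zero : ∀ α ∈ R0, α ≠ (0 : V)
  span_top : Submodule.span ℝ (R0 : Set V) = ⊤
  reduced : ∀ α ∈ R0, ∀ t : ℝ, t • α ∈ R0 → t = 1 ∨ t = -1
  crystallographic : ∀ α ∈ R0, ∀ β ∈ R0, ∃ k : ℤ, ⟪β, coroot α⟫ = (k : ℝ)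
  reflect_mem : ∀ α ∈ R0, ∀ β ∈ R0, β - ⟪β, coroot α⟫ • α ∈ R0
  irreducible : ∀ S : Finset V, S ⊆ R0 →
      (∀ a ∈ S, ∀ b ∈ R0, b ∉ S → ⟪a, b⟫ = 0) → S = ∅ ∨ S = R0
  pos : Finset V
  pos_subset : pos ⊆ R0
  pos_or_neg : ∀ α ∈ R0, α ∈ pos ∨ -α ∈ pos
  pos_not_both : ∀ α ∈ pos, -α ∉ pos
  pos_add : ∀ α ∈ pos, ∀ β ∈ pos, α + β ∈ R0 → α + β ∈ pos
  simpleRoot : Fin n → V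
  simpleRoot_mem : ∀ j, simpleRoot j ∈ pos
  pos_natCombo : ∀ α ∈ pos, ∃ k : Fin n → ℕ, α = ∑ j, (k j : ℝ) • simpleRoot j
  hshort : V
  hshort_mem : hshort ∈ pos
  hshort_short : ∀ α ∈ R0, ‖hshort‖ ≤ ‖α‖
  hshort_highest : ∀ α ∈ R0, ‖α‖ = ‖hshort‖ →
      ∃ k : Fin n → ℕ, hshort - α = ∑ j, (k j : ℝ) • simpleRoot j

namespace RootSystemData

variable {V : Type*} [NormedAddCommGroup V] [InnerProductSpace ℝ V]
variable (D : RootSystemData V)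

/-- The weight lattice `P`. -/
def weightLattice : Set V :=
  {x : V | ∀ α ∈ D.R0, ∃ k : ℤ, ⟪x, coroot α⟫ = (k : ℝ)}

/-- The root lattice `Q`. -/
def rootLattice : Set V := (Submodule.span ℤ (D.R0 : Set V) : Set V)

/-- The coweight lattice `P∨`. -/
def coweightLattice : Set V :=
  {x : V | ∀ α ∈ D.R0, ∃ k : ℤ, ⟪x, α⟫ = (k : ℝ)}

/-- The dominant cone. -/
def dominant : Set V := {x : V | ∀ α ∈ D.pos, 0 ≤ ⟪x, coroot α⟫}

/-- `ω` is a minuscule (dominant) weight. -/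
def IsMinuscule (ω : V) : Prop :=
  ω ∈ D.weightLattice ∧ ω ∈ D.dominant ∧ ω ≠ 0 ∧
    ∀ α ∈ D.pos, ⟪ω, coroot α⟫ ≤ 1

/-- `ω` is the quasi-minuscule weight, i.e. the highest short root. -/
def IsQuasiMinuscule (ω : V) : Prop := ω = D.hshort

/-- The saturated set `P_ϑ` containing the (quasi-)minuscule weights. -/
def Ptheta : Set V :=
  {ν : V | ν ∈ D.weightLattice ∧ ∀ α ∈ D.R0, α ≠ ν → |⟪ν, coroot α⟫| ≤ 1}

/-- Half sum of the positive roots. -/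
def rhoHalf : V := (2⁻¹ : ℝ) • ∑ α ∈ D.pos, α

/-- Half sum of the positive coroots. -/
def rhoVee : V := (2⁻¹ : ℝ) • ∑ α ∈ D.pos, coroot α

/-- `(α, r)` encodes an affine root. -/
def IsAffRoot (a : V × ℤ) : Prop := a.1 ∈ D.R0

/-- `(α, r)` encodes a positive affine root. -/
def IsAffPos (a : V × ℤ) : Prop :=
  a.1 ∈ D.R0 ∧ (1 ≤ a.2 ∨ (a.2 = 0 ∧ a.1 ∈ D.pos))

/-- `(α, r)` encodes a negative affine root. -/
def IsAffNeg (a : V × ℤ) : Prop := D.IsAffPos (-a.1, -a.2)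

/-- The simple affine roots `a₀ = -ϑ∨ + c`, `a_j = α_j∨`. -/
def aSimple (j : Fin (D.n + 1)) : V × ℤ :=
  Fin.cons (α := fun _ => V × ℤ) (-D.hshort, (1 : ℤ))
    (fun i => (D.simpleRoot i, (0 : ℤ))) j

/-- The reflections generating the finite Weyl group `W₀`. -/
def W0Gens : Set (Equiv.Perm V) :=
  {e | ∃ α ∈ D.R0, ∀ x, e x = x - ⟪x, coroot α⟫ • α}

/-- The finite Weyl group `W₀`. -/
def W0 : Subgroup (Equiv.Perm V) := Subgroup.closure D.W0Gens

variable (c : ℝ)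

/-- The affine reflections generating the affine Weyl group `W_R`. -/
def AffGens : Set (Equiv.Perm V) :=
  {e | ∃ a : V × ℤ, D.IsAffRoot a ∧ ∀ x, e x = sAff c a x}

/-- The affine Weyl group `W_R`. -/
def WR : Subgroup (Equiv.Perm V) := Subgroup.closure (D.AffGens c)

/-- The translations `t_{cλ}`, `λ ∈ P`. -/
def TransGens : Set (Equiv.Perm V) :=
  {e | ∃ lam ∈ D.weightLattice, ∀ x : V, e x = x + c • lam}

/-- The extended affine Weyl group `W = W₀ ⋉ t(cP)`. -/
def Wext : Subgroup (Equiv.Perm V) :=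
  Subgroup.closure (D.AffGens c ∪ D.TransGens c)

/-- The set `R(w) = R⁺ ∩ w⁻¹(R⁻)`. -/
def RW (w : Equiv.Perm V) : Set (V × ℤ) :=
  {a | D.IsAffPos a ∧ ∃ b : V × ℤ, D.IsAffNeg b ∧ mapsRoot c w a b}

/-- The length `ℓ(w) = #R(w)`. -/
def len (w : Equiv.Perm V) : ℕ := (D.RW c w).ncard

/-- The closed fundamental alcove `A_c`. -/
def alcove : Set V := {x | ∀ a : V × ℤ, D.IsAffPos a → 0 ≤ aval c a x}

/-- `wmin x` is the unique shortest element of the affine Weyl group mapping `x` into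
the fundamental alcove. -/
def IsWmin (wmin : V → Equiv.Perm V) : Prop :=
  ∀ x : V, wmin x ∈ D.WR c ∧ (wmin x) x ∈ D.alcove c ∧
    ∀ w ∈ D.WR c, w x ∈ D.alcove c → D.len c (wmin x) < D.len c w ∨ w = wmin x

/-- One step in the Bruhat order: `w < w s_a` whenever `ℓ(w) < ℓ(w s_a)`. -/
def bruhatStep (w w' : Equiv.Perm V) : Prop :=
  ∃ a : V × ℤ, D.IsAffPos a ∧ ∃ e : Equiv.Perm V,
    (∀ x, e x = sAff c a x) ∧ w' = w * e ∧ D.len c w < D.len c w'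

/-- The Bruhat order on the affine Weyl group. -/
def bruhatLE (w w' : Equiv.Perm V) : Prop :=
  Relation.ReflTransGen (D.bruhatStep c) w w'

/-- The partial order on `V`: `x ≤ y` iff `x₊ = y₊` and `w_x ≤ w_y` (Bruhat). -/
def vle (wmin : V → Equiv.Perm V) (x y : V) : Prop :=
  (wmin x) x = (wmin y) y ∧ D.bruhatLE c (wmin x) (wmin y)

/-- The interval `[x, y]` for the order `vle`. -/
def vInterval (wmin : V → Equiv.Perm V) (x y : V) : Set V :=
  {z : V | D.vle c wmin x z ∧ D.vle c wmin z y}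

/-- The partial order `⪯` on the weight lattice:
`μ ⪯ λ` iff `λ - μ ∈ Q` and `Conv [μ₊, μ] ⊆ Conv [λ₊, λ]`. -/
def pleq (wmin : V → Equiv.Perm V) (μ lam : V) : Prop :=
  lam - μ ∈ D.rootLattice ∧
    convexHull ℝ (D.vInterval c wmin ((wmin μ) μ) μ)
      ⊆ convexHull ℝ (D.vInterval c wmin ((wmin lam) lam) lam)

section Ops

variable {R : Type*} [Field R]

/-- `τ` is a multiplicity function: nonvanishing on affine roots, and invariant
under the (extended affine) Weyl group action on the affine roots. -/
def IsMultiplicity (τ : V × ℤ → R) : Prop :=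
  (∀ a : V × ℤ, D.IsAffRoot a → τ a ≠ 0) ∧
    ∀ w ∈ D.Wext c, ∀ a b : V × ℤ, D.IsAffRoot a → D.IsAffRoot b →
      mapsRoot c w a b → τ a = τ b

/-- `τ_w = ∏_{a ∈ R(w)} τ_a`. -/
def tauw (τ : V × ℤ → R) (w : Equiv.Perm V) : R := ∏ᶠ a ∈ D.RW c w, τ a

/-- `τ₀`, the multiplicity of the affine simple root `a₀`. -/
def tauZero (τ : V × ℤ → R) : R := τ (-D.hshort, (1 : ℤ))

/-- The operator `I_{j₁} ∘ ⋯ ∘ I_{jℓ}` attached to a word in the simple reflections. -/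
def wordOp (τ : V × ℤ → R) (l : List (Fin (D.n + 1))) : (V → R) → V → R :=
  (l.map fun j => Iop c τ (D.aSimple j)).foldr (· ∘ ·) id

/-- `l` is a reduced word for `w`, i.e. `w = s_{j₁} ∘ ⋯ ∘ s_{jℓ}` with `ℓ = ℓ(w)`. -/
def IsReducedWord (w : Equiv.Perm V) (l : List (Fin (D.n + 1))) : Prop :=
  l.length = D.len c w ∧
    ∀ x : V, w x = ((l.map fun j => sAff c (D.aSimple j)).foldr (· ∘ ·) id) x

/-- `e∨_τ(η) = ∏_{α ∈ R₀⁺} τ_{α∨}^{⟨η,α∨⟩}`. -/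
def etau (τ : V × ℤ → R) (η : V) : R :=
  ∏ α ∈ D.pos, τ (α, (0 : ℤ)) ^ ⌊⟪η, coroot α⟫⌋

/-- `h∨_τ = τ₀² e∨_τ(ϑ)`. -/
def hvee (τ : V × ℤ → R) : R := D.tauZero τ ^ 2 * D.etau τ D.hshort

/-- `θ(μ) = #{b ∈ R(w_μ) : b(μ) = -2}`. -/
def theta (wmin : V → Equiv.Perm V) (μ : V) : ℕ :=
  {b : V × ℤ | b ∈ D.RW c (wmin μ) ∧ aval c b μ = -2}.ncard

/-- The coefficient `c_{λ,η} = θ(λ-η) e∨_τ(η) (h∨_τ)^{-sign⟨λ,η∨⟩}`. -/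
def ccoef (τ : V × ℤ → R) (wmin : V → Equiv.Perm V) (lam η : V) : R :=
  (D.theta c wmin (lam - η) : R) * D.etau τ η *
    D.hvee τ ^ (-sgnZ ⟪lam, coroot η⟫)

/-- The coefficient `a_{λ,ν} = τ_{w_{w_λ(λ-ν)}} τ_{w_{w_λ(λ-ν)} w_λ} τ_{w_λ}⁻¹`. -/
def acoef (τ : V × ℤ → R) (wmin : V → Equiv.Perm V) (lam ν : V) : R :=
  D.tauw c τ (wmin ((wmin lam) (lam - ν))) *
    D.tauw c τ (wmin ((wmin lam) (lam - ν)) * wmin lam) *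
    (D.tauw c τ (wmin lam))⁻¹

/-- The coefficient `b_{λ,ν}`. -/
def bcoef (τ : V × ℤ → R) (wmin : V → Equiv.Perm V) (lam ν : V) : R :=
  if (wmin (lam - ν)) (lam - ν) = (wmin lam) lam then
    D.tauw c τ (wmin ((wmin lam) (lam - ν))) ^ 2 *
      (if D.IsAffNeg (ν, ⌊(1 - ⟪lam, coroot ν⟫) / c⌋) then 1 else 0)
  else D.ccoef c τ wmin ((wmin lam) lam) (linPart (wmin lam) ν)

/-- The intertwining operator `(𝒥f)(λ) = τ_{w_λ}⁻¹ (I_{w_λ} f)(λ₊)`, where `Iw` assigns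
to each `w_λ` the composite of integral-reflection operators along a reduced word. -/
def Jcal (τ : V × ℤ → R) (wmin : V → Equiv.Perm V)
    (Iw : Equiv.Perm V → (V → R) → V → R) (f : V → R) (x : V) : R :=
  (D.tauw c τ (wmin x))⁻¹ * Iw (wmin x) f ((wmin x) x)

end Ops

/-- The Yang–Yang type Morse function `𝒱_μ`. -/
def morse (t : V → ℝ) (μ ξ : V) : ℝ :=
  (c / 2) * ⟪ξ, ξ⟫ - 2 * Real.pi * ⟪D.rhoVee + μ, ξ⟫ +
    ∑ α ∈ D.pos, (2 / ⟪α, α⟫) * ∫ x in (0:ℝ)..(⟪ξ, α⟫), mvfun (t α) x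

/-- The critical equation `cξ + ∑_{α>0} v_α(⟨ξ,α⟩) α∨ = 2π(ρ∨+μ)`. -/
def criticalEq (t : V → ℝ) (μ ξ : V) : Prop :=
  c • ξ + ∑ α ∈ D.pos, mvfun (t α) ⟪ξ, α⟫ • coroot α
    = (2 * Real.pi) • (D.rhoVee + μ)

/-- The Hessian bilinear form `H_{η,ζ}(ξ)`. -/
def hessForm (t : V → ℝ) (ξ η ζ : V) : ℝ :=
  c * ⟪η, ζ⟫ + ∑ α ∈ D.R0,
    (1 - t α ^ 2) * ⟪η, α⟫ * ⟪ζ, α⟫ /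
      (⟪α, α⟫ * (1 - 2 * t α * Real.cos ⟪ξ, α⟫ + t α ^ 2))

/-- `κ_± = (2/n) ∑_{α>0} (1-t_α²)/(1 ± |t_α|)²`; here `s = ±1`. -/
def kappaPM (t : V → ℝ) (s : ℝ) : ℝ :=
  (2 / (D.n : ℝ)) * ∑ α ∈ D.pos, (1 - t α ^ 2) / (1 + s * |t α|) ^ 2

end RootSystemData

open RootSystemData in
/-- The orthogonality weight `δ_λ = τ_{w_λ}²`. -/
def deltaW {V : Type*} [NormedAddCommGroup V] [InnerProductSpace ℝ V]
    (D : RootSystemData V) (c : ℝ) (τ : V × ℤ → ℝ) (wmin : V → Equiv.Perm V)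
    (lam : V) : ℝ :=
  D.tauw c τ (wmin lam) ^ 2

open RootSystemData in
/-- Membership in the Hilbert space `ℓ²(P,δ)`. -/
def MemL2 {V : Type*} [NormedAddCommGroup V] [InnerProductSpace ℝ V]
    (D : RootSystemData V) (c : ℝ) (τ : V × ℤ → ℝ) (wmin : V → Equiv.Perm V)
    (f : V → ℂ) : Prop :=
  Summable fun p : D.weightLattice => ‖f p.1‖ ^ 2 * deltaW D c τ wmin p.1

open RootSystemData in
/-- The inner product `⟨f,g⟩_δ = ∑_{λ∈P} f(λ) conj(g(λ)) δ_λ` of `ℓ²(P,δ)`. -/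
def innerDelta {V : Type*} [NormedAddCommGroup V] [InnerProductSpace ℝ V]
    (D : RootSystemData V) (c : ℝ) (τ : V × ℤ → ℝ) (wmin : V → Equiv.Perm V)
    (f g : V → ℂ) : ℂ :=
  ∑' p : D.weightLattice, f p.1 * (starRingEnd ℂ) (g p.1) * ((deltaW D c τ wmin p.1 : ℝ) : ℂ)

open RootSystemData in
/-- The squared norm `∑_{λ∈P} |f(λ)|² δ_λ` of `ℓ²(P,δ)`. -/
def normSqDelta {V : Type*} [NormedAddCommGroup V] [InnerProductSpace ℝ V]
    (D : RootSystemData V) (c : ℝ) (τ : V × ℤ → ℝ) (wmin : V → Equiv.Perm V)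
    (f : V → ℂ) : ℝ :=
  ∑' p : D.weightLattice, ‖f p.1‖ ^ 2 * deltaW D c τ wmin p.1

/-!
The affine roots in `R(w_λ)` are those whose hyperplanes separate `λ` from the fundamental alcove,
so that `δ_λ` is the product of `τ_a²` over the positive `a` with `a(λ) < 0`. The reflection `s_j`
permutes the positive affine roots other than `a_j`: it fixes a point of the wall `a_j = 0` at which
all of these are positive. Hence `δ_{s_j λ} = τ_j² δ_λ` whenever `a_j(λ) > 0`, which is the
detailed balance between the off-diagonal coefficients of `T̂_j` at `λ` and `s_j λ`; boundedness and
symmetry follow because these are bounded coefficients of a weighted reflection. An element of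
length zero permutes the positive affine roots, so it preserves `δ` and acts by isometries.
-/

open scoped Topology

lemma exists_forall_lineMap_pos {ι : Type*} {S : Set ι} {u v : ι → ℝ}
    (hfin : {i ∈ S | v i ≤ 0}.Finite) (hu : ∀ i ∈ S, 0 ≤ u i)
    (huv : ∀ i ∈ S, u i = 0 → 0 < v i) :
    ∃ t : ℝ, ∀ i ∈ S, 0 < AffineMap.lineMap (u i) (v i) t := by
  have near : ∀ᶠ t in 𝓝[>] (0 : ℝ), ∀ i ∈ {i ∈ S | v i ≤ 0},
      0 < AffineMap.lineMap (u i) (v i) t := by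
    refine (Filter.eventually_all_finite hfin).2 fun i ⟨hi, hvi⟩ => ?_
    have hui : 0 < u i := (hu i hi).lt_of_ne' fun h => hvi.not_gt (huv i hi h)
    have hcont : Continuous fun t : ℝ => AffineMap.lineMap (u i) (v i) t :=
      AffineMap.lineMap_continuous
    exact (hcont.tendsto' 0 (u i) (AffineMap.lineMap_apply_zero _ _)).mono_left
      nhdsWithin_le_nhds |>.eventually_const_lt hui
  obtain ⟨t, ht, ht0, ht1⟩ := (near.and (Ioo_mem_nhdsGT one_pos)).exists
  refine ⟨t, fun i hi => ?_⟩
  by_cases hvi : v i ≤ 0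
  · exact ht i ⟨hi, hvi⟩
  · rw [AffineMap.lineMap_apply_ring]
    exact add_pos_of_nonneg_of_pos (mul_nonneg (sub_nonneg.2 ht1.le) (hu i hi))
      (mul_pos ht0 (not_le.1 hvi))

section Coroots

variable {V : Type*} [NormedAddCommGroup V] [InnerProductSpace ℝ V]

lemma inner_coroot (x α : V) : ⟪x, coroot α⟫ = 2 / ⟪α, α⟫ * ⟪x, α⟫ :=
  real_inner_smul_right _ _ _

lemma inner_coroot_pos_iff {x α : V} : 0 < ⟪x, coroot α⟫ ↔ 0 < ⟪x, α⟫ := by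
  rcases eq_or_ne α 0 with rfl | hα
  · simp [coroot]
  · rw [inner_coroot, mul_pos_iff_of_pos_left (div_pos two_pos (real_inner_self_pos.2 hα))]

lemma inner_self_coroot {α : V} (hα : α ≠ 0) : ⟪α, coroot α⟫ = 2 := by
  rw [inner_coroot, div_mul_cancel₀ _ (inner_self_ne_zero.2 hα)]

lemma coroot_neg (α : V) : coroot (-α) = -coroot α := by
  simp only [coroot, inner_neg_neg, smul_neg]

lemma coroot_involutive : Function.Involutive (coroot : V → V) := by
  intro α
  rcases eq_or_ne α 0 with rfl | hα
  · simp [coroot]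
  · have hαα : ⟪α, α⟫ ≠ 0 := inner_self_ne_zero.2 hα
    rw [coroot, inner_coroot, real_inner_comm α (coroot α), inner_self_coroot hα, coroot, smul_smul]
    convert one_smul ℝ α using 2
    field_simp

lemma map_coroot (e : V ≃ₗᵢ[ℝ] V) (α : V) :
    e (coroot α) = coroot (e α) := by
  rw [coroot, coroot, map_smul, e.inner_map_map]

lemma sub_inner_coroot_smul (α β : V) :
    β - ⟪β, coroot α⟫ • α = (ℝ ∙ α)ᗮ.reflection β := by
  rw [Submodule.reflection_orthogonal_apply, Submodule.reflection_singleton_apply, inner_coroot,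
    real_inner_self_eq_norm_sq, real_inner_comm]
  simp only [RCLike.ofReal_real_eq_id, id_eq]
  module

lemma norm_sub_inner_coroot_smul (α β : V) : ‖β - ⟪β, coroot α⟫ • α‖ = ‖β‖ := by
  rw [sub_inner_coroot_smul, LinearIsometryEquiv.norm_map]

lemma coroot_sub_inner_coroot_smul (α β : V) :
    coroot (β - ⟪β, coroot α⟫ • α) = coroot β - ⟪α, coroot β⟫ • coroot α := by
  rw [sub_inner_coroot_smul, ← map_coroot, ← sub_inner_coroot_smul,
    inner_coroot, inner_coroot, coroot, coroot, real_inner_smul_left, smul_smul,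
    real_inner_comm α β]
  congr 2
  ring

end Coroots

section AffineRoots

variable {V : Type*} [NormedAddCommGroup V] [InnerProductSpace ℝ V] {c : ℝ}

lemma aval_zero (a : V × ℤ) : aval c a 0 = a.2 * c := by
  rw [aval, inner_zero_left, zero_add]

lemma aval_neg (a : V × ℤ) (x : V) : aval c (-a) x = -aval c a x := by
  simp only [aval, Prod.fst_neg, Prod.snd_neg, coroot_neg, inner_neg_right, Int.cast_neg]
  ring

lemma aval_add_smul (a : V × ℤ) (x y : V) (t : ℝ) :
    aval c a (x + t • y) = aval c a x + t * ⟪y, coroot a.1⟫ := by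
  rw [aval, aval, inner_add_left, real_inner_smul_left]
  ring

lemma aval_lineMap (a : V × ℤ) (x y : V) (t : ℝ) :
    aval c a (AffineMap.lineMap x y t) = AffineMap.lineMap (aval c a x) (aval c a y) t := by
  rw [AffineMap.lineMap_apply_module, AffineMap.lineMap_apply_ring]
  simp only [aval, inner_add_left, real_inner_smul_left]
  ring

lemma aval_injective (hc : c ≠ 0) : Function.Injective (aval c : V × ℤ → V → ℝ) := by
  intro a b h
  have hsnd : a.2 = b.2 := by
    have h0 := congrFun h 0
    rw [aval_zero, aval_zero] at h0
    exact_mod_cast mul_right_cancel₀ hc h0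
  refine Prod.ext (coroot_involutive.injective (ext_inner_left ℝ fun x => ?_)) hsnd
  simpa only [aval, hsnd, add_left_inj] using congrFun h x

lemma aval_sAff_self {a : V × ℤ} (ha : a.1 ≠ 0) (x : V) :
    aval c a (sAff c a x) = -aval c a x := by
  rw [sAff, sub_eq_add_neg, ← neg_smul, aval_add_smul, inner_self_coroot ha]
  ring

lemma sAff_involutive {a : V × ℤ} (ha : a.1 ≠ 0) : Function.Involutive (sAff c a) := by
  intro x
  rw [sAff, aval_sAff_self ha, sAff]
  module

lemma sAff_eq_self {a : V × ℤ} {x : V} (hx : aval c a x = 0) : sAff c a x = x := by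
  rw [sAff, hx, zero_smul, sub_zero]

/-- The affine reflection `s_a` as a permutation of `V`. -/
def sAffPerm (c : ℝ) {a : V × ℤ} (ha : a.1 ≠ 0) : Equiv.Perm V :=
  (sAff_involutive (c := c) ha).toPerm

lemma mapsRoot.aval_apply {w : Equiv.Perm V} {a b : V × ℤ} (h : mapsRoot c w a b) (x : V) :
    aval c b (w x) = aval c a x := by
  rw [← h, ← Equiv.Perm.mul_apply, inv_mul_cancel, Equiv.Perm.one_apply]

lemma mapsRoot.neg {w : Equiv.Perm V} {a b : V × ℤ} (h : mapsRoot c w a b) :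
    mapsRoot c w (-a) (-b) := fun x => by
  rw [aval_neg, aval_neg, h]

lemma mapsRoot.inv {w : Equiv.Perm V} {a b : V × ℤ} (h : mapsRoot c w a b) :
    mapsRoot c w⁻¹ b a := fun x => by
  rw [inv_inv, h.aval_apply]

lemma mapsRoot.right_unique (hc : c ≠ 0) {w : Equiv.Perm V} {a b b' : V × ℤ}
    (h : mapsRoot c w a b) (h' : mapsRoot c w a b') : b = b' :=
  aval_injective hc (funext fun x => (h x).symm.trans (h' x))

end AffineRoots

section WeightedL2

variable {P 𝕜 : Type*} [RCLike 𝕜] {δ : P → ℝ} {F G : P → 𝕜}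

lemma summable_mul_star_mul_weight (hδ : ∀ p, 0 ≤ δ p) (hF : Summable fun p => ‖F p‖ ^ 2 * δ p)
    (hG : Summable fun p => ‖G p‖ ^ 2 * δ p) :
    Summable fun p => F p * starRingEnd 𝕜 (G p) * (δ p : 𝕜) := by
  refine (hF.add hG).of_norm_bounded fun p => ?_
  rw [norm_mul, norm_mul, RCLike.norm_conj, RCLike.norm_ofReal, abs_of_nonneg (hδ p), ← add_mul]
  refine mul_le_mul_of_nonneg_right ?_ (hδ p)
  nlinarith [sq_nonneg (‖F p‖ - ‖G p‖), sq_nonneg ‖F p‖, sq_nonneg ‖G p‖]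

/-- The operator `F ↦ u · (F ∘ σ) + v · F` on functions on `P`: the common shape of the
difference-reflection operators, with `σ` the reflection. -/
def weightedReflection (σ : Equiv.Perm P) (u v : P → ℝ) (F : P → 𝕜) (p : P) : 𝕜 :=
  (u p : 𝕜) * F (σ p) + (v p : 𝕜) * F p

variable {σ : Equiv.Perm P} {u v : P → ℝ} {A B : ℝ}

lemma norm_sq_weightedReflection_mul_le (hδ : ∀ p, 0 ≤ δ p)
    (hbal : ∀ p, u (σ p) * δ (σ p) = u p * δ p) (hu : ∀ p, u p * u (σ p) ≤ A)
    (hv : ∀ p, v p ^ 2 ≤ B) (p : P) :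
    ‖weightedReflection σ u v F p‖ ^ 2 * δ p ≤
      2 * A * (‖F (σ p)‖ ^ 2 * δ (σ p)) + 2 * B * (‖F p‖ ^ 2 * δ p) := by
  have hnorm : ‖weightedReflection σ u v F p‖ ^ 2 ≤
      2 * (u p ^ 2 * ‖F (σ p)‖ ^ 2 + v p ^ 2 * ‖F p‖ ^ 2) := calc
    _ ≤ (‖(u p : 𝕜) * F (σ p)‖ + ‖(v p : 𝕜) * F p‖) ^ 2 := by
      gcongr
      exact norm_add_le _ _
    _ ≤ 2 * (‖(u p : 𝕜) * F (σ p)‖ ^ 2 + ‖(v p : 𝕜) * F p‖ ^ 2) := add_sq_le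
    _ = _ := by simp only [norm_mul, RCLike.norm_ofReal, mul_pow, sq_abs]
  calc ‖weightedReflection σ u v F p‖ ^ 2 * δ p
      ≤ 2 * (u p ^ 2 * ‖F (σ p)‖ ^ 2 + v p ^ 2 * ‖F p‖ ^ 2) * δ p :=
        mul_le_mul_of_nonneg_right hnorm (hδ p)
    _ = 2 * (u p * (u p * δ p) * ‖F (σ p)‖ ^ 2 + v p ^ 2 * (‖F p‖ ^ 2 * δ p)) := by ring
    _ = 2 * (u p * u (σ p) * (‖F (σ p)‖ ^ 2 * δ (σ p)) + v p ^ 2 * (‖F p‖ ^ 2 * δ p)) := by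
      rw [← hbal]
      ring
    _ ≤ 2 * (A * (‖F (σ p)‖ ^ 2 * δ (σ p)) + B * (‖F p‖ ^ 2 * δ p)) := by
      have hδp := hδ p
      have hδσp := hδ (σ p)
      gcongr
      exacts [hu p, hv p]
    _ = _ := by ring

lemma summable_weightedReflection (hδ : ∀ p, 0 ≤ δ p)
    (hbal : ∀ p, u (σ p) * δ (σ p) = u p * δ p) (hu : ∀ p, u p * u (σ p) ≤ A)
    (hv : ∀ p, v p ^ 2 ≤ B) (hF : Summable fun p => ‖F p‖ ^ 2 * δ p) :
    Summable fun p => ‖weightedReflection σ u v F p‖ ^ 2 * δ p :=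
  .of_nonneg_of_le (fun p => mul_nonneg (sq_nonneg _) (hδ p))
    (norm_sq_weightedReflection_mul_le hδ hbal hu hv)
    (((σ.summable_iff.2 hF).mul_left _).add (hF.mul_left _))

lemma tsum_norm_sq_weightedReflection_le (hδ : ∀ p, 0 ≤ δ p)
    (hbal : ∀ p, u (σ p) * δ (σ p) = u p * δ p) (hu : ∀ p, u p * u (σ p) ≤ A)
    (hv : ∀ p, v p ^ 2 ≤ B) (hF : Summable fun p => ‖F p‖ ^ 2 * δ p) :
    ∑' p, ‖weightedReflection σ u v F p‖ ^ 2 * δ p ≤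
      2 * (A + B) * ∑' p, ‖F p‖ ^ 2 * δ p := by
  have hFσ : Summable fun p => ‖F (σ p)‖ ^ 2 * δ (σ p) :=
    hF.comp_injective σ.injective
  calc ∑' p, ‖weightedReflection σ u v F p‖ ^ 2 * δ p
      ≤ ∑' p, (2 * A * (‖F (σ p)‖ ^ 2 * δ (σ p)) + 2 * B * (‖F p‖ ^ 2 * δ p)) :=
        (summable_weightedReflection hδ hbal hu hv hF).tsum_le_tsum
          (norm_sq_weightedReflection_mul_le hδ hbal hu hv)
          ((hFσ.mul_left _).add (hF.mul_left _))
    _ = 2 * A * ∑' p, ‖F p‖ ^ 2 * δ p + 2 * B * ∑' p, ‖F p‖ ^ 2 * δ p := by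
        rw [(hFσ.mul_left _).tsum_add (hF.mul_left _), tsum_mul_left, tsum_mul_left,
          σ.tsum_eq fun p => ‖F p‖ ^ 2 * δ p]
    _ = _ := by ring

lemma tsum_weightedReflection_mul_star (hδ : ∀ p, 0 ≤ δ p) (hσ : Function.Involutive σ)
    (hbal : ∀ p, u (σ p) * δ (σ p) = u p * δ p) (hu : ∀ p, u p * u (σ p) ≤ A)
    (hv : ∀ p, v p ^ 2 ≤ B) (hF : Summable fun p => ‖F p‖ ^ 2 * δ p)
    (hG : Summable fun p => ‖G p‖ ^ 2 * δ p) :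
    ∑' p, weightedReflection σ u v F p * starRingEnd 𝕜 (G p) * (δ p : 𝕜) =
      ∑' p, F p * starRingEnd 𝕜 (weightedReflection σ u v G p) * (δ p : 𝕜) := by
  let offDiag (p : P) : 𝕜 := u p * F (σ p) * starRingEnd 𝕜 (G p) * (δ p : 𝕜)
  let diag (p : P) : 𝕜 := v p * F p * starRingEnd 𝕜 (G p) * (δ p : 𝕜)
  have hdiag : Summable diag := by
    have hvF := summable_weightedReflection (σ := σ) (u := 0) hδ (by simp) (A := 0) (by simp) hv hF
    simpa [weightedReflection, diag] using summable_mul_star_mul_weight hδ hvF hG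
  have hoff : Summable offDiag := by
    have huF := summable_weightedReflection (v := 0) hδ hbal hu (B := 0) (by simp) hF
    simpa [weightedReflection, offDiag] using summable_mul_star_mul_weight hδ huF hG
  have hoffσ : Summable fun p => offDiag (σ p) := hoff.comp_injective σ.injective
  -- Detailed balance turns the reindexing `p ↦ σ p` of the off-diagonal part into adjunction.
  have hadjoint : ∀ p, offDiag (σ p) + diag p =
      F p * starRingEnd 𝕜 (weightedReflection σ u v G p) * (δ p : 𝕜) := fun p => by
    have hbal' : (u (σ p) : 𝕜) * δ (σ p) = u p * δ p := by exact_mod_cast hbal p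
    simp only [offDiag, diag, weightedReflection, hσ p, map_add, map_mul, RCLike.conj_ofReal]
    linear_combination F p * starRingEnd 𝕜 (G (σ p)) * hbal'
  calc ∑' p, weightedReflection σ u v F p * starRingEnd 𝕜 (G p) * (δ p : 𝕜)
      = ∑' p, (offDiag p + diag p) := by
        simp only [weightedReflection, offDiag, diag, add_mul]
    _ = ∑' p, (offDiag (σ p) + diag p) := by
        rw [hoff.tsum_add hdiag, hoffσ.tsum_add hdiag, σ.tsum_eq offDiag]
    _ = ∑' p, F p * starRingEnd 𝕜 (weightedReflection σ u v G p) * (δ p : 𝕜) := tsum_congr hadjoint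

end WeightedL2

namespace RootSystemData

variable {V : Type*} [NormedAddCommGroup V] [InnerProductSpace ℝ V] {D : RootSystemData V}

section Positivity

lemma neg_mem_R0 {α : V} (hα : α ∈ D.R0) : -α ∈ D.R0 := by
  have h := D.reflect_mem α hα α hα
  rw [inner_self_coroot (D.ne_zero α hα)] at h
  convert h using 1
  module

lemma IsAffRoot.ne_zero {a : V × ℤ} (ha : D.IsAffRoot a) : a.1 ≠ 0 := D.ne_zero _ ha

lemma IsAffRoot.neg {a : V × ℤ} (ha : D.IsAffRoot a) : D.IsAffRoot (-a) := neg_mem_R0 ha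

lemma IsAffPos.isAffRoot {a : V × ℤ} (ha : D.IsAffPos a) : D.IsAffRoot a := ha.1

lemma IsAffPos.snd_nonneg {a : V × ℤ} (ha : D.IsAffPos a) : 0 ≤ a.2 := by
  rcases ha.2 with h | ⟨h, -⟩ <;> omega

lemma IsAffNeg.isAffRoot {a : V × ℤ} (ha : D.IsAffNeg a) : D.IsAffRoot a :=
  neg_neg a ▸ IsAffRoot.neg (IsAffPos.isAffRoot ha)

lemma neg_mem_pos_iff {α : V} (hα : α ∈ D.R0) : -α ∈ D.pos ↔ α ∉ D.pos :=
  ⟨fun h h' => D.pos_not_both _ h' h, (D.pos_or_neg α hα).resolve_left⟩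

lemma isAffNeg_iff_not_isAffPos {a : V × ℤ} (ha : D.IsAffRoot a) :
    D.IsAffNeg a ↔ ¬ D.IsAffPos a := by
  have hneg : D.IsAffNeg a ↔ 1 ≤ -a.2 ∨ -a.2 = 0 ∧ -a.1 ∈ D.pos := and_iff_right (neg_mem_R0 ha)
  have hpos : D.IsAffPos a ↔ 1 ≤ a.2 ∨ a.2 = 0 ∧ a.1 ∈ D.pos := and_iff_right ha
  rw [hneg, hpos, neg_mem_pos_iff ha]
  rcases lt_trichotomy a.2 0 with h | h | h
  · exact iff_of_true (by omega) (by omega)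
  · simp [h]
  · exact iff_of_false (by omega) (by omega)

lemma isAffPos_aSimple (j : Fin (D.n + 1)) : D.IsAffPos (D.aSimple j) := by
  refine Fin.cases ?_ (fun i => ?_) j
  · exact ⟨neg_mem_R0 (D.pos_subset D.hshort_mem), Or.inl le_rfl⟩
  · exact ⟨D.pos_subset (D.simpleRoot_mem i), Or.inr ⟨rfl, D.simpleRoot_mem i⟩⟩

lemma span_range_simpleRoot (D : RootSystemData V) :
    Submodule.span ℝ (Set.range D.simpleRoot) = ⊤ := by
  rw [eq_top_iff, ← D.span_top, Submodule.span_le]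
  have hpos : ∀ α ∈ D.pos, α ∈ Submodule.span ℝ (Set.range D.simpleRoot) := by
    intro α hα
    obtain ⟨k, rfl⟩ := D.pos_natCombo α hα
    exact Submodule.sum_mem _ fun j _ => Submodule.smul_mem _ _ (Submodule.subset_span ⟨j, rfl⟩)
  intro α hα
  rcases D.pos_or_neg α hα with h | h
  · exact hpos α h
  · exact neg_neg α ▸ Submodule.neg_mem _ (hpos _ h)

/-- The simple roots as a basis of `V`. -/
def simpleBasis (D : RootSystemData V) : Module.Basis (Fin D.n) ℝ V :=
  basisOfTopLeSpanOfCardEqFinrank D.simpleRoot D.span_range_simpleRoot.ge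
    (by rw [D.rank_eq, Fintype.card_fin])

lemma exists_inner_simpleRoot_eq (D : RootSystemData V) (v : Fin D.n → ℝ) :
    ∃ q : V, ∀ i, ⟪q, D.simpleRoot i⟫ = v i := by
  have : FiniteDimensional ℝ V :=
    Module.finite_of_finrank_pos (D.rank_eq ▸ D.n_pos)
  have : CompleteSpace V := FiniteDimensional.complete ℝ V
  refine ⟨(InnerProductSpace.toDual ℝ V).symm (D.simpleBasis.constr ℝ v).toContinuousLinearMap,
    fun i => ?_⟩
  have hi : D.simpleRoot i = D.simpleBasis i := by simp [simpleBasis]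
  rw [InnerProductSpace.toDual_symm_apply, hi]
  exact D.simpleBasis.constr_basis ℝ v i

lemma exists_coeff_ne_zero {α : V} (hα : α ∈ D.pos) {j : Fin D.n} (hne : α ≠ D.simpleRoot j)
    {k : Fin D.n → ℕ} (hk : α = ∑ i, (k i : ℝ) • D.simpleRoot i) : ∃ i ≠ j, k i ≠ 0 := by
  by_contra! h
  have hαj : α = (k j : ℝ) • D.simpleRoot j := by
    rw [hk]
    exact Finset.sum_eq_single j (fun i _ hi => by rw [h i hi, Nat.cast_zero, zero_smul])
      (by simp)
  rcases D.reduced _ (D.pos_subset (D.simpleRoot_mem j)) (k j) (hαj ▸ D.pos_subset hα)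
    with h1 | h1
  · exact hne (by rw [hαj, h1, one_smul])
  · linarith [(k j).cast_nonneg (α := ℝ)]

lemma inner_pos_of_ne_simpleRoot {q : V} {j : Fin D.n}
    (hq : ∀ i, i ≠ j → 0 < ⟪q, D.simpleRoot i⟫) (hj : 0 ≤ ⟪q, D.simpleRoot j⟫)
    {α : V} (hα : α ∈ D.pos) (hne : α ≠ D.simpleRoot j) : 0 < ⟪q, α⟫ := by
  obtain ⟨k, hk⟩ := D.pos_natCombo α hα
  obtain ⟨i, hij, hi⟩ := exists_coeff_ne_zero hα hne hk
  simp only [hk, inner_sum, real_inner_smul_right]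
  refine Finset.sum_pos' (fun m _ => mul_nonneg (Nat.cast_nonneg _) ?_)
    ⟨i, Finset.mem_univ i, mul_pos (by positivity) (hq i hij)⟩
  rcases eq_or_ne m j with rfl | hm
  exacts [hj, (hq m hm).le]

lemma exists_forall_inner_pos (D : RootSystemData V) : ∃ q : V, ∀ α ∈ D.pos, 0 < ⟪q, α⟫ := by
  obtain ⟨q, hq⟩ := D.exists_inner_simpleRoot_eq fun _ => 1
  have hpos : ∀ i, 0 < ⟪q, D.simpleRoot i⟫ := fun i => hq i ▸ one_pos
  refine ⟨q, fun α hα => ?_⟩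
  let j : Fin D.n := ⟨0, D.n_pos⟩
  rcases eq_or_ne α (D.simpleRoot j) with rfl | hne
  · exact hpos j
  · exact inner_pos_of_ne_simpleRoot (fun i _ => hpos i) (hpos j).le hα hne

lemma hshort_mem_dominant (D : RootSystemData V) : D.hshort ∈ D.dominant := by
  intro γ hγ
  obtain ⟨q, hq⟩ := D.exists_forall_inner_pos
  have hγR := D.pos_subset hγ
  obtain ⟨k, hk⟩ := D.hshort_highest _ (D.reflect_mem γ hγR _ (D.pos_subset D.hshort_mem))
    (norm_sub_inner_coroot_smul γ D.hshort)
  have hnonneg : 0 ≤ ⟪D.hshort, coroot γ⟫ * ⟪q, γ⟫ := by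
    rw [← real_inner_smul_right, ← sub_sub_cancel D.hshort (⟪D.hshort, coroot γ⟫ • γ), hk]
    simp only [inner_sum, real_inner_smul_right]
    exact Finset.sum_nonneg fun j _ =>
      mul_nonneg (Nat.cast_nonneg _) (hq _ (D.simpleRoot_mem j)).le
  exact nonneg_of_mul_nonneg_left hnonneg (hq γ hγ)

lemma inner_hshort_coroot_lt_two {β : V} (hβ : β ∈ D.R0) (hne : β ≠ D.hshort) :
    ⟪D.hshort, coroot β⟫ < 2 := by
  have hβpos : 0 < ⟪β, β⟫ := real_inner_self_pos.2 (D.ne_zero _ hβ)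
  have hshort : ⟪D.hshort, D.hshort⟫ ≤ ⟪β, β⟫ := by
    simp only [real_inner_self_eq_norm_sq]
    gcongr
    exact D.hshort_short β hβ
  have hdiff : 0 < ⟪β - D.hshort, β - D.hshort⟫ := real_inner_self_pos.2 (sub_ne_zero.2 hne)
  rw [real_inner_sub_sub_self, real_inner_comm D.hshort β] at hdiff
  rw [inner_coroot, div_mul_eq_mul_div, div_lt_iff₀ hβpos]
  linarith

end Positivity

variable {c : ℝ}

section ChamberPoints

lemma finite_setOf_aval_mem_interval (D : RootSystemData V) (hc : 0 < c) (x y : V) (A B : ℝ) :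
    {a | D.IsAffRoot a ∧ A ≤ aval c a x ∧ aval c a y ≤ B}.Finite := by
  let M (z : V) : ℝ := ∑ α ∈ D.R0, |⟪z, coroot α⟫|
  have hM : ∀ z, ∀ α ∈ D.R0, |⟪z, coroot α⟫| ≤ M z := fun z α hα =>
    Finset.single_le_sum (f := fun α => |⟪z, coroot α⟫|) (fun _ _ => abs_nonneg _) hα
  refine (D.R0 ×ˢ Finset.Icc ⌈(A - M x) / c⌉ ⌊(B + M y) / c⌋).finite_toSet.subset ?_
  rintro ⟨α, r⟩ ⟨hα, hA, hB⟩
  refine Finset.mem_coe.2 (Finset.mem_product.2 ⟨hα, Finset.mem_Icc.2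
    ⟨Int.ceil_le.2 ((div_le_iff₀ hc).2 ?_), Int.le_floor.2 ((le_div_iff₀ hc).2 ?_)⟩⟩)
  · have := (abs_le.1 (hM x α hα)).2
    rw [aval] at hA
    linarith
  · have := (abs_le.1 (hM y α hα)).1
    rw [aval] at hB
    linarith

lemma exists_forall_aval_lineMap_pos (hc : 0 < c) {S : Set (V × ℤ)} {x y : V}
    (hS : ∀ a ∈ S, D.IsAffRoot a) (hx : ∀ a ∈ S, 0 ≤ aval c a x)
    (hxy : ∀ a ∈ S, aval c a x = 0 → 0 < aval c a y) :
    ∃ t : ℝ, ∀ a ∈ S, 0 < aval c a (AffineMap.lineMap x y t) := by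
  have hfin : {a ∈ S | aval c a y ≤ 0}.Finite :=
    (D.finite_setOf_aval_mem_interval hc x y 0 0).subset fun a ha => ⟨hS a ha.1, hx a ha.1, ha.2⟩
  simpa only [aval_lineMap] using exists_forall_lineMap_pos hfin hx hxy

lemma exists_forall_isAffPos_aval_pos (D : RootSystemData V) (hc : 0 < c) :
    ∃ p : V, ∀ a, D.IsAffPos a → 0 < aval c a p := by
  obtain ⟨q, hq⟩ := D.exists_forall_inner_pos
  obtain ⟨t, ht⟩ := exists_forall_aval_lineMap_pos hc (S := {a | D.IsAffPos a}) (x := 0) (y := q)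
    (fun a ha => ha.isAffRoot)
    (fun a ha => by
      rw [aval_zero]
      exact mul_nonneg (Int.cast_nonneg ha.snd_nonneg) hc.le)
    (fun a ha h0 => by
      have hr : a.2 = 0 := by simpa [aval_zero, hc.ne'] using h0
      have hα : a.1 ∈ D.pos := by simpa [hr] using ha.2
      simpa [aval, hr] using inner_coroot_pos_iff.2 (hq _ hα))
  exact ⟨_, ht⟩

lemma exists_wall_point_of_perturbation (hc : 0 < c) {j : Fin (D.n + 1)} {x y : V}
    (hxj : aval c (D.aSimple j) x = 0) (hyj : aval c (D.aSimple j) y = 0)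
    (h : ∀ b, D.IsAffPos b → b ≠ D.aSimple j →
      0 ≤ aval c b x ∧ (aval c b x = 0 → 0 < aval c b y)) :
    ∃ z, aval c (D.aSimple j) z = 0 ∧
      ∀ b, D.IsAffPos b → b ≠ D.aSimple j → 0 < aval c b z := by
  obtain ⟨t, ht⟩ := exists_forall_aval_lineMap_pos hc
    (S := {b | D.IsAffPos b ∧ b ≠ D.aSimple j}) (fun b hb => hb.1.isAffRoot)
    (fun b hb => (h b hb.1 hb.2).1) (fun b hb => (h b hb.1 hb.2).2)
  exact ⟨_, by rw [aval_lineMap, hxj, hyj, AffineMap.lineMap_same_apply],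
    fun b hb hne => ht b ⟨hb, hne⟩⟩

lemma exists_wall_point_succ (hc : 0 < c) (i : Fin D.n) :
    ∃ z, aval c (D.aSimple i.succ) z = 0 ∧
      ∀ b, D.IsAffPos b → b ≠ D.aSimple i.succ → 0 < aval c b z := by
  have hsimple : D.aSimple i.succ = (D.simpleRoot i, 0) := rfl
  obtain ⟨q, hq⟩ := D.exists_inner_simpleRoot_eq fun m => if m = i then 0 else 1
  have hqi : ⟪q, D.simpleRoot i⟫ = 0 := by rw [hq, if_pos rfl]
  refine exists_wall_point_of_perturbation hc (x := 0) (y := q) ?_ ?_ fun b hb hne => ⟨?_, ?_⟩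
  · simp [aval_zero, hsimple]
  · simp [aval, hsimple, inner_coroot, hqi]
  · rw [aval_zero]
    exact mul_nonneg (Int.cast_nonneg hb.snd_nonneg) hc.le
  · intro h0
    have hr : b.2 = 0 := by simpa [aval_zero, hc.ne'] using h0
    have hα : b.1 ∈ D.pos := by simpa [hr] using hb.2
    have hαi : b.1 ≠ D.simpleRoot i := fun h => hne (Prod.ext h hr)
    have hqα : 0 < ⟪q, b.1⟫ := inner_pos_of_ne_simpleRoot
      (fun m hm => by rw [hq, if_neg hm]; exact one_pos) hqi.ge hα hαi
    simpa [aval, hr] using inner_coroot_pos_iff.2 hqα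

lemma exists_wall_point_zero (hc : 0 < c) :
    ∃ z, aval c (D.aSimple 0) z = 0 ∧
      ∀ b, D.IsAffPos b → b ≠ D.aSimple 0 → 0 < aval c b z := by
  have hsimple : D.aSimple 0 = (-D.hshort, 1) := rfl
  have hself : ⟪D.hshort, coroot D.hshort⟫ = 2 :=
    inner_self_coroot (D.ne_zero _ (D.pos_subset D.hshort_mem))
  have aval_mid : ∀ b : V × ℤ,
      aval c b ((c / 2) • D.hshort) = c / 2 * ⟪D.hshort, coroot b.1⟫ + b.2 * c := fun b => by
    rw [aval, real_inner_smul_left]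
  obtain ⟨p, hp⟩ := D.exists_forall_isAffPos_aval_pos hc
  refine exists_wall_point_of_perturbation hc (x := (c / 2) • D.hshort)
    (y := p + (aval c (D.aSimple 0) p / 2) • D.hshort) ?_ ?_ fun b hb hne => ?_
  · simp [aval_mid, hsimple, coroot_neg, hself]
  · rw [aval_add_smul, hsimple, coroot_neg, inner_neg_right, hself]
    ring
  rcases hb.2 with hr | ⟨hr, hα⟩
  · suffices 0 < aval c b ((c / 2) • D.hshort) from ⟨this.le, fun h0 => absurd h0 this.ne'⟩
    rw [aval_mid]
    by_cases hα : b.1 = -D.hshort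
    · have hr1 : b.2 ≠ 1 := fun h => hne (Prod.ext hα h)
      have hr2 : (2 : ℝ) ≤ b.2 := by exact_mod_cast (show 2 ≤ b.2 by omega)
      rw [hα, coroot_neg, inner_neg_right, hself]
      nlinarith
    · have hlt : ⟪D.hshort, coroot (-b.1)⟫ < 2 :=
        inner_hshort_coroot_lt_two (neg_mem_R0 hb.isAffRoot) fun h => hα (neg_eq_iff_eq_neg.1 h)
      have hr1 : (1 : ℝ) ≤ b.2 := by exact_mod_cast hr
      rw [coroot_neg, inner_neg_right] at hlt
      nlinarith
  · have hmid : aval c b ((c / 2) • D.hshort) = c / 2 * ⟪D.hshort, coroot b.1⟫ := by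
      rw [aval_mid, hr, Int.cast_zero, zero_mul, add_zero]
    rw [hmid]
    refine ⟨mul_nonneg (half_pos hc).le (D.hshort_mem_dominant _ hα), fun h0 => ?_⟩
    rw [aval_add_smul, (mul_eq_zero_iff_left (half_pos hc).ne').1 h0, mul_zero, add_zero]
    exact hp b hb

lemma exists_wall_point (hc : 0 < c) (j : Fin (D.n + 1)) :
    ∃ z, aval c (D.aSimple j) z = 0 ∧
      ∀ b, D.IsAffPos b → b ≠ D.aSimple j → 0 < aval c b z :=
  Fin.cases (exists_wall_point_zero hc) (exists_wall_point_succ hc) j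

lemma aSimple_ne_zero (D : RootSystemData V) (j : Fin (D.n + 1)) : (D.aSimple j).1 ≠ 0 :=
  (isAffPos_aSimple j).isAffRoot.ne_zero

lemma isAffPos_and_ne_aSimple_iff_of_mapsRoot (hc : 0 < c) {j : Fin (D.n + 1)} {a b : V × ℤ}
    (ha : D.IsAffRoot a) (hb : D.IsAffRoot b)
    (h : mapsRoot c (sAffPerm c (D.aSimple_ne_zero j)) a b) :
    (D.IsAffPos a ∧ a ≠ D.aSimple j) ↔ (D.IsAffPos b ∧ b ≠ D.aSimple j) := by
  obtain ⟨z, hz0, hz⟩ := exists_wall_point hc j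
  have aval_pos_iff : ∀ d, D.IsAffRoot d →
      (0 < aval c d z ↔ D.IsAffPos d ∧ d ≠ D.aSimple j) := by
    refine fun d hd => ⟨fun hpos => ?_, fun h => hz d h.1 h.2⟩
    refine ⟨by_contra fun hneg => ?_, fun hdj => hpos.ne' (hdj ▸ hz0)⟩
    have hd' : D.IsAffPos (-d) := (isAffNeg_iff_not_isAffPos hd).2 hneg
    by_cases hdj : -d = D.aSimple j
    · rw [← neg_neg d, hdj, aval_neg, hz0, neg_zero] at hpos
      exact hpos.false
    · have := hz (-d) hd' hdj
      rw [aval_neg] at this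
      linarith
  have hsz : sAffPerm c (D.aSimple_ne_zero j) z = z := sAff_eq_self hz0
  rw [← aval_pos_iff a ha, ← aval_pos_iff b hb, ← h.aval_apply z, hsz]

lemma exists_forall_aval_pos_iff (D : RootSystemData V) (hc : 0 < c) (x : V) :
    ∃ y, ∀ a, D.IsAffRoot a →
      (0 < aval c a y ↔ 0 < aval c a x ∨ aval c a x = 0 ∧ D.IsAffPos a) := by
  obtain ⟨p, hp⟩ := D.exists_forall_isAffPos_aval_pos hc
  obtain ⟨t, ht⟩ := exists_forall_aval_lineMap_pos (D := D) hc (y := p)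
    (S := {a | D.IsAffRoot a ∧ (0 < aval c a x ∨ aval c a x = 0 ∧ D.IsAffPos a)})
    (fun a ha => ha.1) (fun a ha => ha.2.elim le_of_lt fun h => h.1.ge)
    (fun a ha h0 => ha.2.elim (fun h => absurd h0 h.ne') fun h => hp a h.2)
  refine ⟨_, fun a ha => ⟨fun hpos => ?_, fun h => ht a ⟨ha, h⟩⟩⟩
  by_contra! hnot
  suffices h : 0 < aval c (-a) x ∨ aval c (-a) x = 0 ∧ D.IsAffPos (-a) by
    have := ht (-a) ⟨ha.neg, h⟩
    rw [aval_neg] at this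
    linarith
  rw [aval_neg, neg_pos, neg_eq_zero]
  exact hnot.1.lt_or_eq.imp_right fun h => ⟨h, (isAffNeg_iff_not_isAffPos ha).2 (hnot.2 h)⟩

end ChamberPoints

section WeylAction

lemma Wext_induction {p : Equiv.Perm V → Prop}
    (reflection : ∀ a (ha : D.IsAffRoot a), p (sAffPerm c ha.ne_zero))
    (translation : ∀ lam ∈ D.weightLattice, p (Equiv.addRight (c • lam)))
    (one : p 1) (mul : ∀ w w', p w → p w' → p (w * w')) {w : Equiv.Perm V}
    (hw : w ∈ D.Wext c) : p w := by
  have reflection' : ∀ a, D.IsAffRoot a → ∀ e : Equiv.Perm V, (∀ x, e x = sAff c a x) →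
      p e ∧ p e⁻¹ := by
    intro a ha e he
    obtain rfl : e = sAffPerm c ha.ne_zero := Equiv.ext he
    exact ⟨reflection a ha, reflection a ha⟩
  have translation' : ∀ lam ∈ D.weightLattice, ∀ e : Equiv.Perm V, (∀ x, e x = x + c • lam) →
      p e ∧ p e⁻¹ := by
    intro lam hlam e he
    obtain rfl : e = Equiv.addRight (c • lam) := Equiv.ext he
    have hneg : -lam ∈ D.weightLattice := fun α hα => by
      obtain ⟨k, hk⟩ := hlam α hα
      exact ⟨-k, by rw [inner_neg_left, hk, Int.cast_neg]⟩
    have hinv : (Equiv.addRight (c • lam))⁻¹ = Equiv.addRight (c • -lam) := by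
      rw [smul_neg, inv_eq_iff_mul_eq_one]
      ext x
      simp
    exact ⟨translation lam hlam, hinv ▸ translation _ hneg⟩
  have gen : ∀ e ∈ D.AffGens c ∪ D.TransGens c, p e ∧ p e⁻¹ := by
    rintro e (⟨a, ha, he⟩ | ⟨lam, hlam, he⟩)
    exacts [reflection' a ha e he, translation' lam hlam e he]
  exact Subgroup.closure_induction'' (fun e he => (gen e he).1) (fun e he => (gen e he).2) one
    (fun w w' _ _ => mul w w') hw

lemma sAffPerm_mem_Wext {a : V × ℤ} (ha : D.IsAffRoot a) :
    sAffPerm c ha.ne_zero ∈ D.Wext c :=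
  Subgroup.subset_closure (Or.inl ⟨a, ha, fun _ => rfl⟩)

lemma WR_le_Wext (D : RootSystemData V) (c : ℝ) : D.WR c ≤ D.Wext c :=
  Subgroup.closure_mono Set.subset_union_left

lemma exists_forall_aval_sAff {a b : V × ℤ} (ha : D.IsAffRoot a) (hb : D.IsAffRoot b) :
    ∃ d, D.IsAffRoot d ∧ ∀ x, aval c b (sAff c a x) = aval c d x := by
  obtain ⟨k, hk⟩ := D.crystallographic _ hb _ ha
  refine ⟨(b.1 - ⟪b.1, coroot a.1⟫ • a.1, b.2 - a.2 * k), D.reflect_mem _ ha _ hb, fun x => ?_⟩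
  rw [sAff, sub_eq_add_neg, ← neg_smul, aval_add_smul]
  simp only [aval, coroot_sub_inner_coroot_smul, inner_sub_right, real_inner_smul_right, hk]
  push_cast
  ring

lemma exists_mapsRoot {w : Equiv.Perm V} (hw : w ∈ D.Wext c) {a : V × ℤ}
    (ha : D.IsAffRoot a) : ∃ b, D.IsAffRoot b ∧ mapsRoot c w a b := by
  have pullback : ∀ a, D.IsAffRoot a →
      ∃ b, D.IsAffRoot b ∧ ∀ x, aval c a (w⁻¹ x) = aval c b x := by
    refine Wext_induction (p := fun w => ∀ a, D.IsAffRoot a →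
      ∃ b, D.IsAffRoot b ∧ ∀ x, aval c a (w x) = aval c b x) ?_ ?_ ?_ ?_ (inv_mem hw)
    · exact fun a ha b hb => exists_forall_aval_sAff ha hb
    · intro lam hlam a ha
      obtain ⟨k, hk⟩ := hlam a.1 ha
      refine ⟨(a.1, a.2 + k), ha, fun x => ?_⟩
      rw [Equiv.coe_addRight, aval_add_smul, hk, aval, aval]
      push_cast
      ring
    · exact fun a ha => ⟨a, ha, fun _ => rfl⟩
    · intro w w' hw hw' a ha
      obtain ⟨b, hb, hab⟩ := hw a ha
      obtain ⟨d, hd, hbd⟩ := hw' b hb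
      exact ⟨d, hd, fun x => (hab _).trans (hbd x)⟩
  exact pullback a ha

lemma apply_mem_weightLattice {cz : ℤ} {w : Equiv.Perm V} (hw : w ∈ D.Wext (cz : ℝ)) {x : V}
    (hx : x ∈ D.weightLattice) : w x ∈ D.weightLattice := by
  refine Wext_induction (p := fun w => ∀ x ∈ D.weightLattice, w x ∈ D.weightLattice)
    ?_ ?_ (fun _ hx => hx) (fun w w' hw hw' x hx => hw _ (hw' x hx)) hw x hx
  · intro a ha x hx β hβ
    obtain ⟨k, hk⟩ := hx a.1 ha
    obtain ⟨l, hl⟩ := hx β hβ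
    obtain ⟨m, hm⟩ := D.crystallographic β hβ a.1 ha
    refine ⟨l - (k + a.2 * cz) * m, ?_⟩
    change ⟪sAff (cz : ℝ) a x, coroot β⟫ = _
    rw [sAff, aval, inner_sub_left, real_inner_smul_left, hk, hl, hm]
    push_cast
    rfl
  · intro lam hlam x hx β hβ
    obtain ⟨k, hk⟩ := hlam β hβ
    obtain ⟨l, hl⟩ := hx β hβ
    refine ⟨l + cz * k, ?_⟩
    rw [Equiv.coe_addRight, inner_add_left, real_inner_smul_left, hk, hl]
    push_cast
    rfl

/-- The action of an element of the extended affine Weyl group on the weight lattice `P`. -/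
def weightPerm {cz : ℤ} {w : Equiv.Perm V} (hw : w ∈ D.Wext (cz : ℝ)) :
    Equiv.Perm D.weightLattice :=
  w.subtypePerm fun x => ⟨fun h => by simpa using apply_mem_weightLattice (inv_mem hw) h,
    apply_mem_weightLattice hw⟩

end WeylAction

section SeparatingRoots

/-- The positive affine roots whose hyperplane separates `x` from the fundamental alcove, that is
those negative at `x`. They turn out to be the elements of `R(w_x)`. -/
def separatingRoots (D : RootSystemData V) (c : ℝ) (x : V) : Set (V × ℤ) :=
  {a | D.IsAffPos a ∧ aval c a x < 0}

lemma finite_separatingRoots (D : RootSystemData V) (hc : 0 < c) (x : V) :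
    (D.separatingRoots c x).Finite :=
  (D.finite_setOf_aval_mem_interval hc 0 x 0 0).subset fun a ha =>
    ⟨ha.1.isAffRoot, aval_zero (c := c) a ▸
      mul_nonneg (Int.cast_nonneg ha.1.snd_nonneg) hc.le, ha.2.le⟩

lemma mem_RW_iff_of_mapsRoot (hc : c ≠ 0) {w : Equiv.Perm V} {a b : V × ℤ}
    (hb : D.IsAffRoot b) (h : mapsRoot c w a b) :
    a ∈ D.RW c w ↔ D.IsAffPos a ∧ ¬ D.IsAffPos b := by
  rw [← isAffNeg_iff_not_isAffPos hb]
  refine and_congr_right fun _ => ⟨?_, fun hneg => ⟨b, hneg, h⟩⟩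
  rintro ⟨b', hneg, h'⟩
  exact h'.right_unique hc h ▸ hneg

lemma finite_RW (D : RootSystemData V) (hc : 0 < c) (w : Equiv.Perm V) : (D.RW c w).Finite := by
  refine (D.finite_setOf_aval_mem_interval hc 0 (w⁻¹ 0) 0 0).subset ?_
  rintro a ⟨ha, b, hb, hab⟩
  have hb2 : b.2 ≤ 0 := neg_nonneg.1 (IsAffPos.snd_nonneg hb)
  refine ⟨ha.isAffRoot, ?_, ?_⟩
  · rw [aval_zero]
    exact mul_nonneg (Int.cast_nonneg ha.snd_nonneg) hc.le
  · rw [hab, aval_zero]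
    exact mul_nonpos_of_nonpos_of_nonneg (Int.cast_nonpos.2 hb2) hc.le

lemma separatingRoots_subset_RW (hc : c ≠ 0) {w : Equiv.Perm V} (hw : w ∈ D.Wext c) {x : V}
    (hx : w x ∈ D.alcove c) : D.separatingRoots c x ⊆ D.RW c w := by
  rintro a ⟨ha, hax⟩
  obtain ⟨b, hb, hab⟩ := exists_mapsRoot hw ha.isAffRoot
  refine (mem_RW_iff_of_mapsRoot hc hb hab).2 ⟨ha, fun hbpos => hax.not_ge ?_⟩
  rw [← hab.aval_apply]
  exact hx b hbpos

lemma RW_eq_separatingRoots (hc : c ≠ 0) {w : Equiv.Perm V} (hw : w ∈ D.Wext c) {x : V}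
    (hx : w x ∈ D.alcove c) (hreg : ∀ a, D.IsAffRoot a → aval c a x ≠ 0) :
    D.RW c w = D.separatingRoots c x := by
  refine Set.Subset.antisymm ?_ (separatingRoots_subset_RW hc hw hx)
  rintro a ⟨ha, b, hb, hab⟩
  have hnonneg : 0 ≤ aval c (-b) (w x) := hx _ hb
  rw [aval_neg, hab.aval_apply, neg_nonneg] at hnonneg
  exact ⟨ha, hnonneg.lt_of_ne (hreg a ha.isAffRoot)⟩

lemma apply_mem_alcove_of_aval_pos_imp {w : Equiv.Perm V} (hw : w ∈ D.Wext c) {x y : V}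
    (hxy : ∀ a, D.IsAffRoot a → 0 < aval c a x → 0 < aval c a y) (hy : w y ∈ D.alcove c) :
    w x ∈ D.alcove c := by
  intro b hb
  obtain ⟨a, ha, hba⟩ := exists_mapsRoot (inv_mem hw) hb.isAffRoot
  have hab : mapsRoot c w a b := by simpa using hba.inv
  by_contra! hneg
  have hay := hxy (-a) ha.neg (by rwa [aval_neg, ← hab.aval_apply, neg_pos])
  have hby := hy b hb
  rw [hab.aval_apply] at hby
  rw [aval_neg] at hay
  linarith

-- Minimality pins down `w_x` by comparison with `w_y` for a regular point `y` close to `x`, chosen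
-- on the side of the alcove of every affine hyperplane through `x`.
lemma RW_wmin (hc : 0 < c) {wmin : V → Equiv.Perm V} (hwmin : D.IsWmin c wmin) (x : V) :
    D.RW c (wmin x) = D.separatingRoots c x := by
  obtain ⟨y, hy⟩ := D.exists_forall_aval_pos_iff hc x
  have wmin_mem : ∀ z, wmin z ∈ D.Wext c := fun z => D.WR_le_Wext c (hwmin z).1
  have aval_neg_iff : ∀ a, D.IsAffRoot a →
      (aval c a y < 0 ↔ aval c a x < 0 ∨ aval c a x = 0 ∧ ¬ D.IsAffPos a) := fun a ha => by
    have h := hy (-a) ha.neg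
    rw [aval_neg, aval_neg, neg_pos, neg_pos, neg_eq_zero] at h
    exact h.trans (or_congr_right (and_congr_right fun _ => isAffNeg_iff_not_isAffPos ha))
  have hreg : ∀ a, D.IsAffRoot a → aval c a y ≠ 0 := fun a ha h0 => by
    have h1 := hy a ha
    have h2 := aval_neg_iff a ha
    grind
  have hRW : D.RW c (wmin y) = D.separatingRoots c x := by
    rw [RW_eq_separatingRoots hc.ne' (wmin_mem y) (hwmin y).2.1 hreg]
    ext a
    refine and_congr_right fun ha => ?_
    simp [aval_neg_iff a ha.isAffRoot, ha]
  have hyx : wmin y x ∈ D.alcove c := apply_mem_alcove_of_aval_pos_imp (wmin_mem y)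
    (fun a ha h => (hy a ha).2 (Or.inl h)) (hwmin y).2.1
  rcases (hwmin x).2.2 _ (hwmin y).1 hyx with hlt | heq
  · have hle : D.len c (wmin y) ≤ D.len c (wmin x) := by
      rw [len, hRW]
      exact Set.ncard_le_ncard (separatingRoots_subset_RW hc.ne' (wmin_mem x) (hwmin x).2.1)
        (D.finite_RW hc _)
    exact absurd hlt hle.not_gt
  · rw [← heq, hRW]

end SeparatingRoots

section Weight

variable {τ : V × ℤ → ℝ} {wmin : V → Equiv.Perm V}

lemma deltaW_eq_finprod_separatingRoots (hc : 0 < c) (hwmin : D.IsWmin c wmin) (x : V) :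
    deltaW D c τ wmin x = (∏ᶠ a ∈ D.separatingRoots c x, τ a) ^ 2 := by
  rw [deltaW, tauw, RW_wmin hc hwmin]

lemma finprod_mem_eq_of_mapsRoot (hc : c ≠ 0) (hτ : D.IsMultiplicity c τ) {w : Equiv.Perm V}
    (hw : w ∈ D.Wext c) {S T : Set (V × ℤ)} (hS : ∀ a ∈ S, D.IsAffRoot a)
    (hT : ∀ b ∈ T, D.IsAffRoot b)
    (hST : ∀ a b, D.IsAffRoot a → D.IsAffRoot b → mapsRoot c w a b → (a ∈ S ↔ b ∈ T)) :
    ∏ᶠ a ∈ S, τ a = ∏ᶠ b ∈ T, τ b := by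
  choose! e he hmaps using fun a (ha : D.IsAffRoot a) => exists_mapsRoot hw ha
  refine finprod_mem_eq_of_bijOn e ⟨?_, ?_, ?_⟩ fun a ha =>
    hτ.2 w hw a (e a) (hS a ha) (he a (hS a ha)) (hmaps a (hS a ha))
  · exact fun a ha => (hST a _ (hS a ha) (he a (hS a ha)) (hmaps a (hS a ha))).1 ha
  · intro a ha a' ha' haa'
    exact (hmaps a (hS a ha)).inv.right_unique hc (haa' ▸ (hmaps a' (hS a' ha')).inv)
  · intro b hb
    obtain ⟨a, ha, hba⟩ := exists_mapsRoot (inv_mem hw) (hT b hb)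
    have hab : mapsRoot c w a b := by simpa using hba.inv
    exact ⟨a, (hST a b ha (hT b hb) hab).2 hb, (hmaps a ha).right_unique hc hab⟩

lemma isAffPos_iff_of_len_eq_zero (hc : 0 < c) {u : Equiv.Perm V} (hu : D.len c u = 0)
    {a b : V × ℤ} (ha : D.IsAffRoot a) (hb : D.IsAffRoot b) (hab : mapsRoot c u a b) :
    D.IsAffPos a ↔ D.IsAffPos b := by
  have hempty : D.RW c u = ∅ := (Set.ncard_eq_zero (D.finite_RW hc u)).1 hu
  have preserves : ∀ {a b}, D.IsAffRoot b → mapsRoot c u a b → D.IsAffPos a → D.IsAffPos b := by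
    intro a b hb hab ha
    by_contra hbneg
    exact hempty.subset ((mem_RW_iff_of_mapsRoot hc.ne' hb hab).2 ⟨ha, hbneg⟩)
  refine ⟨preserves hb hab, fun hbpos => by_contra fun haneg => ?_⟩
  exact (isAffNeg_iff_not_isAffPos hb).1
    (preserves hb.neg hab.neg ((isAffNeg_iff_not_isAffPos ha).2 haneg)) hbpos

lemma deltaW_apply_of_len_eq_zero (hc : 0 < c) (hτ : D.IsMultiplicity c τ)
    (hwmin : D.IsWmin c wmin) {u : Equiv.Perm V} (hu : u ∈ D.Wext c) (hlen : D.len c u = 0)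
    (x : V) : deltaW D c τ wmin (u x) = deltaW D c τ wmin x := by
  rw [deltaW_eq_finprod_separatingRoots hc hwmin, deltaW_eq_finprod_separatingRoots hc hwmin,
    finprod_mem_eq_of_mapsRoot hc.ne' hτ hu (S := D.separatingRoots c x)
      (T := D.separatingRoots c (u x)) (fun a ha => ha.1.isAffRoot) fun b hb => hb.1.isAffRoot]
  intro a b ha hb hab
  exact and_congr (isAffPos_iff_of_len_eq_zero hc hlen ha hb hab) (by rw [hab.aval_apply])

lemma deltaW_sAff_of_aval_pos (hc : 0 < c) (hτ : D.IsMultiplicity c τ) (hwmin : D.IsWmin c wmin)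
    {j : Fin (D.n + 1)} {x : V} (hx : 0 < aval c (D.aSimple j) x) :
    deltaW D c τ wmin (sAff c (D.aSimple j) x) =
      τ (D.aSimple j) ^ 2 * deltaW D c τ wmin x := by
  set s := sAff c (D.aSimple j) x
  have hs : aval c (D.aSimple j) s < 0 := by
    rw [aval_sAff_self (D.aSimple_ne_zero j)]
    exact neg_neg_of_pos hx
  have hmem : D.aSimple j ∈ D.separatingRoots c s := ⟨isAffPos_aSimple j, hs⟩
  have hprod : ∏ᶠ a ∈ D.separatingRoots c x, τ a =
      ∏ᶠ b ∈ D.separatingRoots c s \ {D.aSimple j}, τ b := by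
    refine finprod_mem_eq_of_mapsRoot hc.ne' hτ (sAffPerm_mem_Wext (isAffPos_aSimple j).isAffRoot)
      (fun a ha => ha.1.isAffRoot) (fun b hb => hb.1.1.isAffRoot) fun a b ha hb hab => ?_
    have haval : aval c b s = aval c a x := hab.aval_apply x
    have hne : aval c a x < 0 → a ≠ D.aSimple j := fun hneg h => hx.not_gt (h ▸ hneg)
    have hperm := isAffPos_and_ne_aSimple_iff_of_mapsRoot hc ha hb hab
    change D.IsAffPos a ∧ aval c a x < 0 ↔ (D.IsAffPos b ∧ aval c b s < 0) ∧ b ≠ D.aSimple j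
    rw [haval]
    tauto
  have hinsert : ∏ᶠ b ∈ D.separatingRoots c s, τ b =
      τ (D.aSimple j) * ∏ᶠ b ∈ D.separatingRoots c s \ {D.aSimple j}, τ b := by
    rw [← finprod_mem_insert _ (Set.notMem_sdiff_of_mem (Set.mem_singleton _))
      (D.finite_separatingRoots hc s).sdiff, Set.insert_sdiff_self_of_mem hmem]
  rw [deltaW_eq_finprod_separatingRoots hc hwmin, deltaW_eq_finprod_separatingRoots hc hwmin,
    hinsert, hprod, mul_pow]

end Weight

section HatT

/-- The coefficient of `f ∘ s_a` in `T̂_a f`, as a function of `t = τ_a` and `s = a(x)`; it is `0`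
on the reflecting hyperplane, where `T̂_a` multiplies by `τ_a`. -/
def reflCoeff (t s : ℝ) : ℝ := if 0 < s then t else if s = 0 then 0 else t⁻¹

/-- The coefficient of `f` in `T̂_a f`, as a function of `t = τ_a` and `s = a(x)`. -/
def diagCoeff (t s : ℝ) : ℝ := if 0 < s then 0 else if s = 0 then t else t - t⁻¹

lemma hatT_ofReal_eq (c : ℝ) (τ : V × ℤ → ℝ) (a : V × ℤ) (f : V → ℂ) (x : V) :
    hatT c (fun a => (τ a : ℂ)) a f x =
      (reflCoeff (τ a) (aval c a x) : ℂ) * f (sAff c a x) +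
        (diagCoeff (τ a) (aval c a x) : ℂ) * f x := by
  unfold hatT reflCoeff diagCoeff
  split_ifs <;> simp

lemma reflCoeff_mul_reflCoeff_neg_le (t s : ℝ) : reflCoeff t s * reflCoeff t (-s) ≤ 1 := by
  rcases lt_trichotomy s 0 with hs | rfl | hs
  · simpa [reflCoeff, hs, hs.not_gt, hs.ne] using inv_mul_le_one
  · simp [reflCoeff]
  · simpa [reflCoeff, hs, hs.not_gt, hs.ne'] using mul_inv_le_one

lemma diagCoeff_sq_le (t s : ℝ) : diagCoeff t s ^ 2 ≤ t ^ 2 + (t - t⁻¹) ^ 2 := by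
  have ht := sq_nonneg t
  have ht' := sq_nonneg (t - t⁻¹)
  unfold diagCoeff
  split_ifs <;> linarith

variable {cz : ℤ} {τ : V × ℤ → ℝ} {wmin : V → Equiv.Perm V}

lemma reflCoeff_mul_deltaW_sAff (hc : 0 < c) (hτ : D.IsMultiplicity c τ)
    (hwmin : D.IsWmin c wmin) (j : Fin (D.n + 1)) (x : V) :
    reflCoeff (τ (D.aSimple j)) (-aval c (D.aSimple j) x) *
        deltaW D c τ wmin (sAff c (D.aSimple j) x) =
      reflCoeff (τ (D.aSimple j)) (aval c (D.aSimple j) x) * deltaW D c τ wmin x := by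
  have ht : τ (D.aSimple j) ≠ 0 := hτ.1 _ (isAffPos_aSimple j).isAffRoot
  have balance_of_pos : ∀ y, 0 < aval c (D.aSimple j) y →
      (τ (D.aSimple j))⁻¹ * deltaW D c τ wmin (sAff c (D.aSimple j) y) =
        τ (D.aSimple j) * deltaW D c τ wmin y := fun y hy => by
    rw [deltaW_sAff_of_aval_pos hc hτ hwmin hy, sq, mul_assoc, inv_mul_cancel_left₀ ht]
  rcases lt_trichotomy (aval c (D.aSimple j) x) 0 with hx | hx | hx
  · have hsx : 0 < aval c (D.aSimple j) (sAff c (D.aSimple j) x) := by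
      rwa [aval_sAff_self (D.aSimple_ne_zero j), neg_pos]
    have hbal := balance_of_pos _ hsx
    rw [sAff_involutive (D.aSimple_ne_zero j)] at hbal
    simpa [reflCoeff, hx, hx.not_gt, hx.ne] using hbal.symm
  · simp [reflCoeff, hx]
  · simpa [reflCoeff, hx, hx.not_gt, hx.ne'] using balance_of_pos x hx

lemma deltaW_nonneg (D : RootSystemData V) (c : ℝ) (τ : V × ℤ → ℝ) (wmin : V → Equiv.Perm V)
    (x : V) : 0 ≤ deltaW D c τ wmin x :=
  sq_nonneg _

/-- The simple affine reflection `s_j` acting on the weight lattice. -/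
def simpleWeightPerm (D : RootSystemData V) (cz : ℤ) (j : Fin (D.n + 1)) :
    Equiv.Perm D.weightLattice :=
  weightPerm (sAffPerm_mem_Wext (c := (cz : ℝ)) (isAffPos_aSimple j).isAffRoot)

lemma simpleWeightPerm_involutive (j : Fin (D.n + 1)) :
    Function.Involutive (D.simpleWeightPerm cz j) := fun p =>
  Subtype.ext (sAff_involutive (D.aSimple_ne_zero j) p.1)

lemma hatT_restrict_eq_weightedReflection (j : Fin (D.n + 1)) (f : V → ℂ) (p : D.weightLattice) :
    hatT (cz : ℝ) (fun a => (τ a : ℂ)) (D.aSimple j) f p =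
      weightedReflection (D.simpleWeightPerm cz j)
        (fun p => reflCoeff (τ (D.aSimple j)) (aval (cz : ℝ) (D.aSimple j) p))
        (fun p => diagCoeff (τ (D.aSimple j)) (aval (cz : ℝ) (D.aSimple j) p))
        (fun p => f p) p :=
  hatT_ofReal_eq (cz : ℝ) τ (D.aSimple j) f p

lemma aval_simpleWeightPerm (j : Fin (D.n + 1)) (p : D.weightLattice) :
    aval (cz : ℝ) (D.aSimple j) (D.simpleWeightPerm cz j p : V) =
      -aval (cz : ℝ) (D.aSimple j) p :=
  aval_sAff_self (D.aSimple_ne_zero j) p.1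

lemma reflCoeff_simpleWeightPerm_mul_deltaW (hc : 0 < cz) (hτ : D.IsMultiplicity (cz : ℝ) τ)
    (hwmin : D.IsWmin (cz : ℝ) wmin) (j : Fin (D.n + 1)) (p : D.weightLattice) :
    reflCoeff (τ (D.aSimple j)) (aval (cz : ℝ) (D.aSimple j) (D.simpleWeightPerm cz j p : V)) *
        deltaW D (cz : ℝ) τ wmin (D.simpleWeightPerm cz j p) =
      reflCoeff (τ (D.aSimple j)) (aval (cz : ℝ) (D.aSimple j) p) * deltaW D (cz : ℝ) τ wmin p := by
  rw [aval_simpleWeightPerm]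
  exact reflCoeff_mul_deltaW_sAff (Int.cast_pos.2 hc) hτ hwmin j p

lemma reflCoeff_mul_reflCoeff_simpleWeightPerm_le (τ : V × ℤ → ℝ) (j : Fin (D.n + 1))
    (p : D.weightLattice) :
    reflCoeff (τ (D.aSimple j)) (aval (cz : ℝ) (D.aSimple j) p) *
      reflCoeff (τ (D.aSimple j))
        (aval (cz : ℝ) (D.aSimple j) (D.simpleWeightPerm cz j p : V)) ≤ 1 := by
  rw [aval_simpleWeightPerm]
  exact reflCoeff_mul_reflCoeff_neg_le _ _

lemma memL2_hatT (hc : 0 < cz) (hτ : D.IsMultiplicity (cz : ℝ) τ)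
    (hwmin : D.IsWmin (cz : ℝ) wmin) (j : Fin (D.n + 1)) {f : V → ℂ}
    (hf : MemL2 D (cz : ℝ) τ wmin f) :
    MemL2 D (cz : ℝ) τ wmin (hatT (cz : ℝ) (fun a => (τ a : ℂ)) (D.aSimple j) f) := by
  simp only [MemL2, hatT_restrict_eq_weightedReflection]
  exact summable_weightedReflection (fun p => D.deltaW_nonneg _ _ _ p.1)
    (reflCoeff_simpleWeightPerm_mul_deltaW hc hτ hwmin j)
    (reflCoeff_mul_reflCoeff_simpleWeightPerm_le τ j) (fun _ => diagCoeff_sq_le _ _) hf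

lemma normSqDelta_hatT_le (hc : 0 < cz) (hτ : D.IsMultiplicity (cz : ℝ) τ)
    (hwmin : D.IsWmin (cz : ℝ) wmin) (j : Fin (D.n + 1)) {f : V → ℂ}
    (hf : MemL2 D (cz : ℝ) τ wmin f) :
    normSqDelta D (cz : ℝ) τ wmin (hatT (cz : ℝ) (fun a => (τ a : ℂ)) (D.aSimple j) f) ≤
      2 * (1 + (τ (D.aSimple j) ^ 2 + (τ (D.aSimple j) - (τ (D.aSimple j))⁻¹) ^ 2)) *
        normSqDelta D (cz : ℝ) τ wmin f := by
  simp only [normSqDelta, hatT_restrict_eq_weightedReflection]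
  exact tsum_norm_sq_weightedReflection_le (fun p => D.deltaW_nonneg _ _ _ p.1)
    (reflCoeff_simpleWeightPerm_mul_deltaW hc hτ hwmin j)
    (reflCoeff_mul_reflCoeff_simpleWeightPerm_le τ j) (fun _ => diagCoeff_sq_le _ _) hf

lemma innerDelta_hatT_left (hc : 0 < cz) (hτ : D.IsMultiplicity (cz : ℝ) τ)
    (hwmin : D.IsWmin (cz : ℝ) wmin) (j : Fin (D.n + 1)) {f g : V → ℂ}
    (hf : MemL2 D (cz : ℝ) τ wmin f) (hg : MemL2 D (cz : ℝ) τ wmin g) :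
    innerDelta D (cz : ℝ) τ wmin (hatT (cz : ℝ) (fun a => (τ a : ℂ)) (D.aSimple j) f) g =
      innerDelta D (cz : ℝ) τ wmin f (hatT (cz : ℝ) (fun a => (τ a : ℂ)) (D.aSimple j) g) := by
  simp only [innerDelta, hatT_restrict_eq_weightedReflection]
  exact tsum_weightedReflection_mul_star (fun p => D.deltaW_nonneg _ _ _ p.1)
    (simpleWeightPerm_involutive j) (reflCoeff_simpleWeightPerm_mul_deltaW hc hτ hwmin j)
    (reflCoeff_mul_reflCoeff_simpleWeightPerm_le τ j) (fun _ => diagCoeff_sq_le _ _) hf hg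

end HatT

section LengthZero

variable {cz : ℤ} {τ : V × ℤ → ℝ} {wmin : V → Equiv.Perm V} {u : Equiv.Perm V}

lemma memL2_comp_inv (hc : 0 < cz) (hτ : D.IsMultiplicity (cz : ℝ) τ)
    (hwmin : D.IsWmin (cz : ℝ) wmin) (hu : u ∈ D.Wext (cz : ℝ)) (hlen : D.len (cz : ℝ) u = 0)
    {f : V → ℂ} (hf : MemL2 D (cz : ℝ) τ wmin f) :
    MemL2 D (cz : ℝ) τ wmin fun x => f (u⁻¹ x) := by
  refine (weightPerm hu).summable_iff.1 (hf.congr fun p => ?_)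
  change _ = ‖f (u⁻¹ (u p))‖ ^ 2 * deltaW D (cz : ℝ) τ wmin (u p)
  rw [deltaW_apply_of_len_eq_zero (Int.cast_pos.2 hc) hτ hwmin hu hlen, ← Equiv.Perm.mul_apply,
    inv_mul_cancel, Equiv.Perm.one_apply]

lemma normSqDelta_comp_inv (hc : 0 < cz) (hτ : D.IsMultiplicity (cz : ℝ) τ)
    (hwmin : D.IsWmin (cz : ℝ) wmin) (hu : u ∈ D.Wext (cz : ℝ)) (hlen : D.len (cz : ℝ) u = 0)
    (f : V → ℂ) :
    normSqDelta D (cz : ℝ) τ wmin (fun x => f (u⁻¹ x)) = normSqDelta D (cz : ℝ) τ wmin f := by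
  rw [normSqDelta, normSqDelta, ← (weightPerm hu).tsum_eq]
  refine tsum_congr fun p => ?_
  change ‖f (u⁻¹ (u p))‖ ^ 2 * deltaW D (cz : ℝ) τ wmin (u p) = _
  rw [deltaW_apply_of_len_eq_zero (Int.cast_pos.2 hc) hτ hwmin hu hlen, ← Equiv.Perm.mul_apply,
    inv_mul_cancel, Equiv.Perm.one_apply]

lemma innerDelta_comp_inv_left (hc : 0 < cz) (hτ : D.IsMultiplicity (cz : ℝ) τ)
    (hwmin : D.IsWmin (cz : ℝ) wmin) (hu : u ∈ D.Wext (cz : ℝ)) (hlen : D.len (cz : ℝ) u = 0)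
    (f g : V → ℂ) :
    innerDelta D (cz : ℝ) τ wmin (fun x => f (u⁻¹ x)) g =
      innerDelta D (cz : ℝ) τ wmin f fun x => g (u x) := by
  rw [innerDelta, innerDelta, ← (weightPerm hu).tsum_eq]
  refine tsum_congr fun p => ?_
  change f (u⁻¹ (u p)) * starRingEnd ℂ (g (u p)) * (deltaW D (cz : ℝ) τ wmin (u p) : ℂ) = _
  rw [deltaW_apply_of_len_eq_zero (Int.cast_pos.2 hc) hτ hwmin hu hlen, ← Equiv.Perm.mul_apply,
    inv_mul_cancel, Equiv.Perm.one_apply]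

end LengthZero

end RootSystemData

open RootSystemData in
theorem statement16_general {V : Type*} [NormedAddCommGroup V] [InnerProductSpace ℝ V]
    (D : RootSystemData V) (cz : ℤ) (hc : 0 < cz)
    (τ : V × ℤ → ℝ) (hτ : D.IsMultiplicity (cz : ℝ) τ)
    (wmin : V → Equiv.Perm V) (hwmin : D.IsWmin (cz : ℝ) wmin) :
    (∀ j : Fin (D.n + 1),
      (∀ f : V → ℂ, MemL2 D (cz : ℝ) τ wmin f →
        MemL2 D (cz : ℝ) τ wmin
          (hatT (cz : ℝ) (fun a => ((τ a : ℝ) : ℂ)) (D.aSimple j) f)) ∧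
      (∃ C : ℝ, ∀ f : V → ℂ, MemL2 D (cz : ℝ) τ wmin f →
        normSqDelta D (cz : ℝ) τ wmin
            (hatT (cz : ℝ) (fun a => ((τ a : ℝ) : ℂ)) (D.aSimple j) f)
          ≤ C * normSqDelta D (cz : ℝ) τ wmin f) ∧
      (∀ f g : V → ℂ, MemL2 D (cz : ℝ) τ wmin f → MemL2 D (cz : ℝ) τ wmin g →
        innerDelta D (cz : ℝ) τ wmin
            (hatT (cz : ℝ) (fun a => ((τ a : ℝ) : ℂ)) (D.aSimple j) f) g
          = innerDelta D (cz : ℝ) τ wmin f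
              (hatT (cz : ℝ) (fun a => ((τ a : ℝ) : ℂ)) (D.aSimple j) g))) ∧
    (∀ u : Equiv.Perm V, u ∈ D.Wext (cz : ℝ) → D.len (cz : ℝ) u = 0 →
      (∀ f : V → ℂ, MemL2 D (cz : ℝ) τ wmin f →
        MemL2 D (cz : ℝ) τ wmin fun x => f (u⁻¹ x)) ∧
      (∃ C : ℝ, ∀ f : V → ℂ, MemL2 D (cz : ℝ) τ wmin f →
        normSqDelta D (cz : ℝ) τ wmin (fun x => f (u⁻¹ x))
          ≤ C * normSqDelta D (cz : ℝ) τ wmin f) ∧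
      (∀ f g : V → ℂ, MemL2 D (cz : ℝ) τ wmin f → MemL2 D (cz : ℝ) τ wmin g →
        innerDelta D (cz : ℝ) τ wmin (fun x => f (u⁻¹ x)) g
          = innerDelta D (cz : ℝ) τ wmin f fun x => g (u x))) := by
  exact ⟨fun j => ⟨fun _ => memL2_hatT hc hτ hwmin j,
      ⟨_, fun _ => normSqDelta_hatT_le hc hτ hwmin j⟩,
      fun _ _ => innerDelta_hatT_left hc hτ hwmin j⟩,
    fun _ hu hlen => ⟨fun _ => memL2_comp_inv hc hτ hwmin hu hlen,
      ⟨1, fun f _ => (one_mul (normSqDelta D cz τ wmin f)).symm ▸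
        (normSqDelta_comp_inv hc hτ hwmin hu hlen f).le⟩,
      fun f g _ _ => innerDelta_comp_inv_left hc hτ hwmin hu hlen f g⟩⟩

open RootSystemData in
/-- for real multiplicity parameters with `0 < τ_a² < 1`, the
difference-reflection operators `T̂_j` and the `Ω`-action map `ℓ²(P,δ)` boundedly into
itself, with `⟨T̂_j f, g⟩_δ = ⟨f, T̂_j g⟩_δ` and `⟨uf, g⟩_δ = ⟨f, u⁻¹g⟩_δ`; i.e. the
difference-reflection representation is unitary with respect to `T_w∗ = T_{w⁻¹}`. -/
theorem statement16 {V : Type*} [NormedAddCommGroup V] [InnerProductSpace ℝ V]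
    (D : RootSystemData V) (cz : ℤ) (hc : 1 < cz)
    (τ : V × ℤ → ℝ) (hτsq : ∀ a : V × ℤ, D.IsAffRoot a → 0 < τ a ^ 2 ∧ τ a ^ 2 < 1)
    (hτinv : ∀ w ∈ D.Wext (cz : ℝ), ∀ a b : V × ℤ, D.IsAffRoot a → D.IsAffRoot b →
      mapsRoot (cz : ℝ) w a b → τ a = τ b)
    (wmin : V → Equiv.Perm V) (hwmin : D.IsWmin (cz : ℝ) wmin) :
    -- the operators T̂_j are bounded and self-adjoint on ℓ²(P,δ)
    (∀ j : Fin (D.n + 1),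
      (∀ f : V → ℂ, MemL2 D (cz : ℝ) τ wmin f →
        MemL2 D (cz : ℝ) τ wmin
          (hatT (cz : ℝ) (fun a => ((τ a : ℝ) : ℂ)) (D.aSimple j) f)) ∧
      (∃ C : ℝ, ∀ f : V → ℂ, MemL2 D (cz : ℝ) τ wmin f →
        normSqDelta D (cz : ℝ) τ wmin
            (hatT (cz : ℝ) (fun a => ((τ a : ℝ) : ℂ)) (D.aSimple j) f)
          ≤ C * normSqDelta D (cz : ℝ) τ wmin f) ∧
      (∀ f g : V → ℂ, MemL2 D (cz : ℝ) τ wmin f → MemL2 D (cz : ℝ) τ wmin g →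
        innerDelta D (cz : ℝ) τ wmin
            (hatT (cz : ℝ) (fun a => ((τ a : ℝ) : ℂ)) (D.aSimple j) f) g
          = innerDelta D (cz : ℝ) τ wmin f
              (hatT (cz : ℝ) (fun a => ((τ a : ℝ) : ℂ)) (D.aSimple j) g))) ∧
    -- the elements u ∈ Ω act boundedly, with adjoint u⁻¹
    (∀ u : Equiv.Perm V, u ∈ D.Wext (cz : ℝ) → D.len (cz : ℝ) u = 0 →
      (∀ f : V → ℂ, MemL2 D (cz : ℝ) τ wmin f →
        MemL2 D (cz : ℝ) τ wmin fun x => f (u⁻¹ x)) ∧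
      (∃ C : ℝ, ∀ f : V → ℂ, MemL2 D (cz : ℝ) τ wmin f →
        normSqDelta D (cz : ℝ) τ wmin (fun x => f (u⁻¹ x))
          ≤ C * normSqDelta D (cz : ℝ) τ wmin f) ∧
      (∀ f g : V → ℂ, MemL2 D (cz : ℝ) τ wmin f → MemL2 D (cz : ℝ) τ wmin g →
        innerDelta D (cz : ℝ) τ wmin (fun x => f (u⁻¹ x)) g
          = innerDelta D (cz : ℝ) τ wmin f fun x => g (u x))) :=
  have hτ : D.IsMultiplicity (cz : ℝ) τ := ⟨fun a ha => sq_pos_iff.1 (hτsq a ha).1, hτinv⟩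
  statement16_general D cz (one_pos.trans hc) τ hτ wmin hwmin
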